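/- Let Ω ⊆ ℝ² be open, ε > 0, h_ex ∈ ℝ, and let f, h₀ : Ω → ℝ be smooth with Δf = f and Δh₀ = h₀ on Ω; set Z := ∇f − h_ex ∇^⊥ h₀. Suppose u : Ω × ℝ → ℂ, A : Ω × ℝ → ℝ², Φ : Ω × ℝ → ℝ are smooth and satisfy ∂_t u + iΦu = Δ_A u + (u/ε²)(1−|u|²) and ∂_t A + ∇Φ = ∇^⊥ curl A + (iu, ∇_A u) pointwise on Ω × ℝ. Then v := u e^{−if} and B := A − h_ex ∇^⊥ h₀ satisfy, pointwise on Ω × ℝ with h' := curl B: ∂_t v + iΦv = Δ_B v + (v/ε²)(1−|v|²) + 2i ∇_B v · Z + ivf − v|Z|², and ∂_t B + ∇Φ = ∇^⊥ h' + (iv, ∇_B v) + |v|²∇f − (|v|²−1) h_ex ∇^⊥ h₀. -/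

import Mathlib

noncomputable section

open Complex

/-- Real inner product of two complex numbers: `(a,b) = Re a · Re b + Im a · Im b`. -/
def rip (a b : ℂ) : ℝ := a.re * b.re + a.im * b.im

/-- `(a, X)` for `a : ℂ` and `X : ℂ²`: the vector in `ℝ²` with components `(a,X₁)`, `(a,X₂)`. -/
def ripv (a : ℂ) (X : ℂ × ℂ) : ℝ × ℝ := (rip a X.1, rip a X.2)

/-- Dot product of `X : ℂ²` with `Z : ℝ²`: `X·Z = X₁Z₁ + X₂Z₂ ∈ ℂ`. -/
def cdotR (X : ℂ × ℂ) (Z : ℝ × ℝ) : ℂ := X.1 * (Z.1 : ℂ) + X.2 * (Z.2 : ℂ)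

/-- Euclidean dot product on `ℝ²`. -/
def rdot (a b : ℝ × ℝ) : ℝ := a.1 * b.1 + a.2 * b.2

/-- Perpendicular of a vector: `Z^⊥ = (−Z₂, Z₁)`. -/
def perp (a : ℝ × ℝ) : ℝ × ℝ := (-a.2, a.1)

/-! ### Spatial differential operators for functions on `ℝ²` -/

/-- First spatial partial derivative `∂₁`. -/
def pd1 {E : Type*} [NormedAddCommGroup E] [NormedSpace ℝ E]
    (f : ℝ × ℝ → E) (x : ℝ × ℝ) : E := fderiv ℝ f x (1, 0)

/-- Second spatial partial derivative `∂₂`. -/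
def pd2 {E : Type*} [NormedAddCommGroup E] [NormedSpace ℝ E]
    (f : ℝ × ℝ → E) (x : ℝ × ℝ) : E := fderiv ℝ f x (0, 1)

/-- Gradient `∇g = (∂₁g, ∂₂g)`. -/
def sgrad (g : ℝ × ℝ → ℝ) (x : ℝ × ℝ) : ℝ × ℝ := (pd1 g x, pd2 g x)

/-- Perpendicular gradient `∇^⊥ g = (−∂₂g, ∂₁g)`. -/
def sgradPerp (g : ℝ × ℝ → ℝ) (x : ℝ × ℝ) : ℝ × ℝ := (-(pd2 g x), pd1 g x)

/-- Laplacian `Δg = ∂₁∂₁g + ∂₂∂₂g`. -/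
def slap (g : ℝ × ℝ → ℝ) (x : ℝ × ℝ) : ℝ := pd1 (pd1 g) x + pd2 (pd2 g) x

/-- Curl of a vector field: `curl X = ∂₁X₂ − ∂₂X₁`. -/
def scurl (X : ℝ × ℝ → ℝ × ℝ) (x : ℝ × ℝ) : ℝ := (pd1 X x).2 - (pd2 X x).1

/-- Divergence of a vector field: `div X = ∂₁X₁ + ∂₂X₂`. -/
def sdiv (X : ℝ × ℝ → ℝ × ℝ) (x : ℝ × ℝ) : ℝ := (pd1 X x).1 + (pd2 X x).2

/-- Covariant partial derivative `∂₁^A u = ∂₁u − iA₁u`. -/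
def cpd1 (A : ℝ × ℝ → ℝ × ℝ) (u : ℝ × ℝ → ℂ) (x : ℝ × ℝ) : ℂ :=
  pd1 u x - Complex.I * ((A x).1 : ℂ) * u x

/-- Covariant partial derivative `∂₂^A u = ∂₂u − iA₂u`. -/
def cpd2 (A : ℝ × ℝ → ℝ × ℝ) (u : ℝ × ℝ → ℂ) (x : ℝ × ℝ) : ℂ :=
  pd2 u x - Complex.I * ((A x).2 : ℂ) * u x

/-- Covariant gradient `∇_A u = ∇u − iAu`. -/
def covGrad (A : ℝ × ℝ → ℝ × ℝ) (u : ℝ × ℝ → ℂ) (x : ℝ × ℝ) : ℂ × ℂ :=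
  (cpd1 A u x, cpd2 A u x)

/-- Covariant Laplacian `Δ_A u = ∂₁^A ∂₁^A u + ∂₂^A ∂₂^A u`. -/
def covLap (A : ℝ × ℝ → ℝ × ℝ) (u : ℝ × ℝ → ℂ) (x : ℝ × ℝ) : ℂ :=
  cpd1 A (cpd1 A u) x + cpd2 A (cpd2 A u) x

/-- Vorticity `μ(u,A) = curl((iu, ∇_A u) + A)`. -/
def svort (u : ℝ × ℝ → ℂ) (A : ℝ × ℝ → ℝ × ℝ) (x : ℝ × ℝ) : ℝ :=
  scurl (fun y => ripv (Complex.I * u y) (covGrad A u y) + A y) x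

/-- Ginzburg–Landau energy density
`g⁰_ε(u,A) = ½(|∇_A u|² + (1−|u|²)²/(2ε²) + (curl A)²)`. -/
def glEnergy (ε : ℝ) (u : ℝ × ℝ → ℂ) (A : ℝ × ℝ → ℝ × ℝ) (x : ℝ × ℝ) : ℝ :=
  (1 / 2) * (Complex.normSq (cpd1 A u x) + Complex.normSq (cpd2 A u x)
    + (1 - Complex.normSq (u x)) ^ 2 / (2 * ε ^ 2) + (scurl A x) ^ 2)

/-! ### Space-time differential operators for functions on `ℝ² × ℝ`
(spatial operators act in the spatial variables, `tdt` is the time derivative) -/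

/-- First spatial partial derivative `∂₁`. -/
def sp1 {E : Type*} [NormedAddCommGroup E] [NormedSpace ℝ E]
    (f : (ℝ × ℝ) × ℝ → E) (z : (ℝ × ℝ) × ℝ) : E := fderiv ℝ f z ((1, 0), 0)

/-- Second spatial partial derivative `∂₂`. -/
def sp2 {E : Type*} [NormedAddCommGroup E] [NormedSpace ℝ E]
    (f : (ℝ × ℝ) × ℝ → E) (z : (ℝ × ℝ) × ℝ) : E := fderiv ℝ f z ((0, 1), 0)

/-- Time derivative `∂_t`. -/
def tdt {E : Type*} [NormedAddCommGroup E] [NormedSpace ℝ E]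
    (f : (ℝ × ℝ) × ℝ → E) (z : (ℝ × ℝ) × ℝ) : E := fderiv ℝ f z ((0, 0), 1)

/-- Spatial gradient. -/
def tgrad (g : (ℝ × ℝ) × ℝ → ℝ) (z : (ℝ × ℝ) × ℝ) : ℝ × ℝ := (sp1 g z, sp2 g z)

/-- Spatial perpendicular gradient `∇^⊥ g = (−∂₂g, ∂₁g)`. -/
def tgradPerp (g : (ℝ × ℝ) × ℝ → ℝ) (z : (ℝ × ℝ) × ℝ) : ℝ × ℝ := (-(sp2 g z), sp1 g z)

/-- Spatial Laplacian. -/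
def tlap (g : (ℝ × ℝ) × ℝ → ℝ) (z : (ℝ × ℝ) × ℝ) : ℝ := sp1 (sp1 g) z + sp2 (sp2 g) z

/-- Spatial curl of a time-dependent vector field. -/
def tcurl (X : (ℝ × ℝ) × ℝ → ℝ × ℝ) (z : (ℝ × ℝ) × ℝ) : ℝ := (sp1 X z).2 - (sp2 X z).1

/-- Spatial divergence of a time-dependent vector field. -/
def tdiv (X : (ℝ × ℝ) × ℝ → ℝ × ℝ) (z : (ℝ × ℝ) × ℝ) : ℝ := (sp1 X z).1 + (sp2 X z).2

/-- Covariant partial derivative `∂₁^B w = ∂₁w − iB₁w`. -/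
def tcpd1 (B : (ℝ × ℝ) × ℝ → ℝ × ℝ) (w : (ℝ × ℝ) × ℝ → ℂ) (z : (ℝ × ℝ) × ℝ) : ℂ :=
  sp1 w z - Complex.I * ((B z).1 : ℂ) * w z

/-- Covariant partial derivative `∂₂^B w = ∂₂w − iB₂w`. -/
def tcpd2 (B : (ℝ × ℝ) × ℝ → ℝ × ℝ) (w : (ℝ × ℝ) × ℝ → ℂ) (z : (ℝ × ℝ) × ℝ) : ℂ :=
  sp2 w z - Complex.I * ((B z).2 : ℂ) * w z

/-- Covariant gradient `∇_B w = ∇w − iBw` (spatial). -/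
def tcovGrad (B : (ℝ × ℝ) × ℝ → ℝ × ℝ) (w : (ℝ × ℝ) × ℝ → ℂ) (z : (ℝ × ℝ) × ℝ) : ℂ × ℂ :=
  (tcpd1 B w z, tcpd2 B w z)

/-- Covariant Laplacian `Δ_B w`. -/
def tcovLap (B : (ℝ × ℝ) × ℝ → ℝ × ℝ) (w : (ℝ × ℝ) × ℝ → ℂ) (z : (ℝ × ℝ) × ℝ) : ℂ :=
  tcpd1 B (tcpd1 B w) z + tcpd2 B (tcpd2 B w) z

/-- Covariant time derivative `∂_ξ w = ∂_t w + iξw`. -/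
def covt (ξ : (ℝ × ℝ) × ℝ → ℝ) (w : (ℝ × ℝ) × ℝ → ℂ) (z : (ℝ × ℝ) × ℝ) : ℂ :=
  tdt w z + Complex.I * (ξ z : ℂ) * w z

/-- Vorticity `μ(w,B) = curl((iw, ∇_B w) + B)`. -/
def tvort (w : (ℝ × ℝ) × ℝ → ℂ) (B : (ℝ × ℝ) × ℝ → ℝ × ℝ) (z : (ℝ × ℝ) × ℝ) : ℝ :=
  tcurl (fun y => ripv (Complex.I * w y) (tcovGrad B w y) + B y) z

/-- Velocity `V(w,B,ξ) = ∇(iw,∂_ξ w) − ∂_t(iw,∇_B w) − (∂_t B + ∇ξ)`. -/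
def tvel (w : (ℝ × ℝ) × ℝ → ℂ) (B : (ℝ × ℝ) × ℝ → ℝ × ℝ) (ξ : (ℝ × ℝ) × ℝ → ℝ)
    (z : (ℝ × ℝ) × ℝ) : ℝ × ℝ :=
  tgrad (fun y => rip (Complex.I * w y) (covt ξ w y)) z
    - tdt (fun y => ripv (Complex.I * w y) (tcovGrad B w y)) z
    - (tdt B z + tgrad ξ z)

/-- Time-dependent Ginzburg–Landau energy density. -/
def tglEnergy (ε : ℝ) (w : (ℝ × ℝ) × ℝ → ℂ) (B : (ℝ × ℝ) × ℝ → ℝ × ℝ)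
    (z : (ℝ × ℝ) × ℝ) : ℝ :=
  (1 / 2) * (Complex.normSq (tcpd1 B w z) + Complex.normSq (tcpd2 B w z)
    + (1 - Complex.normSq (w z)) ^ 2 / (2 * ε ^ 2) + (tcurl B z) ^ 2)

/-!
Write `θ` for `f` seen as a function on space-time and `X = h_ex ∇^⊥ h₀`. The pair
`(v, B - Z) = (u e^{-iθ}, A - ∇θ)` is the gauge transform of `(u, A)`; as `θ` does not depend on
time, `Φ` stays the same. So `v` solves the first equation with potential `B - Z`, and expanding the
square of `∂_j^{B - Z} = ∂_j^B + i Z_j` yields the extra terms, where `div Z = Δf = f` because `X`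
is divergence free. In the second equation the current is gauge invariant and changes by `|v|² Z`
when the potential goes from `B` to `B - Z`, while `curl A - curl B = h_ex Δh₀ = h_ex h₀`.
-/

open Filter Topology

section Derivatives

variable {𝕜 E F G : Type*} [NontriviallyNormedField 𝕜]
  [NormedAddCommGroup E] [NormedSpace 𝕜 E] [NormedAddCommGroup F] [NormedSpace 𝕜 F]
  [NormedAddCommGroup G] [NormedSpace 𝕜 G]

theorem differentiableAt_fderiv_apply {g : E → F} {x : E} (hg : ContDiffAt 𝕜 2 g x) (e : E) :
    DifferentiableAt 𝕜 (fun y => fderiv 𝕜 g y e) x :=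
  ((hg.fderiv_right (m := 1) (by norm_num)).differentiableAt one_ne_zero).clm_apply
    (differentiableAt_const e)

theorem differentiableAt_comp_fst_iff {g : E → G} {z : E × F} :
    DifferentiableAt 𝕜 (fun y : E × F => g y.1) z ↔ DifferentiableAt 𝕜 g z.1 := by
  refine ⟨fun h => ?_, fun h => h.comp z differentiableAt_fst⟩
  exact h.comp (f := fun x => (x, z.2)) z.1
    (differentiableAt_id.prodMk (differentiableAt_const z.2))

theorem fderiv_comp_fst_apply (g : E → G) (z e : E × F) :
    fderiv 𝕜 (fun y : E × F => g y.1) z e = fderiv 𝕜 g z.1 e.1 := by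
  by_cases hg : DifferentiableAt 𝕜 g z.1
  · exact congrArg (· e) (hg.hasFDerivAt.comp z hasFDerivAt_fst).fderiv
  · rw [fderiv_zero_of_not_differentiableAt hg,
      fderiv_zero_of_not_differentiableAt (mt differentiableAt_comp_fst_iff.1 hg)]
    rfl

theorem fderiv_fderiv_apply_comm [IsRCLikeNormedField 𝕜] {g : E → F} {x : E}
    (hg : ContDiffAt 𝕜 2 g x) (d e : E) :
    fderiv 𝕜 (fun y => fderiv 𝕜 g y d) x e = fderiv 𝕜 (fun y => fderiv 𝕜 g y e) x d := by
  have hg' : DifferentiableAt 𝕜 (fderiv 𝕜 g) x :=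
    (hg.fderiv_right (m := 1) (by norm_num)).differentiableAt one_ne_zero
  have apply_const (c : E) :
      fderiv 𝕜 (fun y => fderiv 𝕜 g y c) x = (fderiv 𝕜 (fderiv 𝕜 g) x).flip c := by
    simp [fderiv_clm_apply hg' (differentiableAt_const c)]
  rw [apply_const, apply_const]
  exact (hg.isSymmSndFDerivAt (by simp)).eq e d

end Derivatives

section GaugePhase

variable {E : Type*}

/-- The phase factor `e^{-iθ}` by which a gauge transformation multiplies the order parameter. -/
def gaugePhase (θ : E → ℝ) (z : E) : ℂ := Complex.exp (-Complex.I * (θ z : ℂ))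

theorem norm_gaugePhase (θ : E → ℝ) (z : E) : ‖gaugePhase θ z‖ = 1 := by
  simp [gaugePhase, Complex.norm_exp]

theorem normSq_gaugePhase (θ : E → ℝ) (z : E) : Complex.normSq (gaugePhase θ z) = 1 := by
  rw [Complex.normSq_eq_norm_sq, norm_gaugePhase, one_pow]

end GaugePhase

section CovariantDerivative

variable {E : Type*} [NormedAddCommGroup E] [NormedSpace ℝ E]
  {a b ζ θ : E → ℝ} {u v : E → ℂ} {z : E}

theorem hasFDerivAt_const_mul_ofReal (c : ℂ) (hζ : DifferentiableAt ℝ ζ z) :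
    HasFDerivAt (fun y => c * (ζ y : ℂ)) (c • Complex.ofRealCLM.comp (fderiv ℝ ζ z)) z :=
  (Complex.ofRealCLM.hasFDerivAt.comp z hζ.hasFDerivAt).const_mul c

/-- The directional covariant derivative `∂_e u - i a u`, where `a` is the component in the
direction `e` of the potential. The space and time covariant derivatives of the statement are
instances of it. -/
def covDeriv (e : E) (a : E → ℝ) (u : E → ℂ) (z : E) : ℂ :=
  fderiv ℝ u z e - Complex.I * (a z : ℂ) * u z

theorem covDeriv_congr {e : E} (h : u =ᶠ[𝓝 z] v) : covDeriv e a u z = covDeriv e a v z := by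
  rw [covDeriv, covDeriv, h.fderiv_eq, h.eq_of_nhds]

theorem covDeriv_add (e : E) (hu : DifferentiableAt ℝ u z) (hv : DifferentiableAt ℝ v z) :
    covDeriv e a (fun y => u y + v y) z = covDeriv e a u z + covDeriv e a v z := by
  simp only [covDeriv, fderiv_fun_add hu hv, add_apply]
  ring

theorem covDeriv_mul (e : E) (hu : DifferentiableAt ℝ u z) (hv : DifferentiableAt ℝ v z) :
    covDeriv e a (fun y => u y * v y) z = u z * covDeriv e a v z + fderiv ℝ u z e * v z := by
  simp only [covDeriv, fderiv_fun_mul hu hv, add_apply, smul_apply, smul_eq_mul]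
  ring

theorem differentiableAt_covDeriv (e : E) (ha : DifferentiableAt ℝ a z)
    (hu : ContDiffAt ℝ 2 u z) : DifferentiableAt ℝ (covDeriv e a u) z :=
  (differentiableAt_fderiv_apply hu e).sub
    ((hasFDerivAt_const_mul_ofReal _ ha).differentiableAt.mul (hu.differentiableAt two_ne_zero))

theorem covDeriv_sub_potential (e : E) :
    covDeriv e (fun y => b y - ζ y) v z = covDeriv e b v z + Complex.I * (ζ z : ℂ) * v z := by
  simp only [covDeriv, Complex.ofReal_sub]
  ring

theorem covDeriv_covDeriv_sub_potential (e : E) (hb : DifferentiableAt ℝ b z)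
    (hζ : DifferentiableAt ℝ ζ z) (hv : ContDiffAt ℝ 2 v z) :
    covDeriv e (fun y => b y - ζ y) (covDeriv e (fun y => b y - ζ y) v) z
      = covDeriv e b (covDeriv e b v) z + 2 * Complex.I * ((ζ z : ℂ) * covDeriv e b v z)
        + Complex.I * (fderiv ℝ ζ z e : ℂ) * v z - (ζ z : ℂ) ^ 2 * v z := by
  have hIζ := hasFDerivAt_const_mul_ofReal Complex.I hζ
  have hIζ' := hIζ.differentiableAt
  have hv' := hv.differentiableAt two_ne_zero
  have expand : covDeriv e (fun y => b y - ζ y) v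
      = fun y => covDeriv e b v y + Complex.I * (ζ y : ℂ) * v y :=
    funext fun y => covDeriv_sub_potential e
  rw [covDeriv_sub_potential, expand,
    covDeriv_add e (differentiableAt_covDeriv e hb hv) (hIζ'.fun_mul hv'),
    covDeriv_mul e hIζ' hv', hIζ.fderiv]
  simp only [smul_apply, ContinuousLinearMap.comp_apply, Complex.ofRealCLM_apply, smul_eq_mul]
  linear_combination (ζ z : ℂ) ^ 2 * v z * Complex.I_sq

theorem contDiffAt_gaugePhase {n : WithTop ℕ∞} (hθ : ContDiffAt ℝ n θ z) :
    ContDiffAt ℝ n (gaugePhase θ) z :=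
  (contDiffAt_const.mul (Complex.ofRealCLM.contDiff.contDiffAt.comp z hθ)).cexp

theorem differentiableAt_gaugePhase (hθ : DifferentiableAt ℝ θ z) :
    DifferentiableAt ℝ (gaugePhase θ) z :=
  (hasFDerivAt_const_mul_ofReal _ hθ).differentiableAt.cexp

theorem fderiv_gaugePhase_apply (hθ : DifferentiableAt ℝ θ z) (e : E) :
    fderiv ℝ (gaugePhase θ) z e = -Complex.I * (fderiv ℝ θ z e : ℂ) * gaugePhase θ z := by
  rw [mul_comm]
  exact congrArg (· e) (hasFDerivAt_const_mul_ofReal (-Complex.I) hθ).cexp.fderiv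

theorem covDeriv_mul_gaugePhase (e : E) (hu : DifferentiableAt ℝ u z)
    (hθ : DifferentiableAt ℝ θ z) :
    covDeriv e (fun y => a y - fderiv ℝ θ y e) (fun y => u y * gaugePhase θ y) z
      = covDeriv e a u z * gaugePhase θ z := by
  rw [covDeriv_mul e hu (differentiableAt_gaugePhase hθ), covDeriv_sub_potential, covDeriv,
    covDeriv, fderiv_gaugePhase_apply hθ]
  ring

theorem covDeriv_covDeriv_mul_gaugePhase (e : E) (ha : DifferentiableAt ℝ a z)
    (hu : ContDiffAt ℝ 2 u z) (hθ : ContDiffAt ℝ 1 θ z) :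
    covDeriv e (fun y => a y - fderiv ℝ θ y e)
        (covDeriv e (fun y => a y - fderiv ℝ θ y e) (fun y => u y * gaugePhase θ y)) z
      = covDeriv e a (covDeriv e a u) z * gaugePhase θ z := by
  have first_order :
      covDeriv e (fun y => a y - fderiv ℝ θ y e) (fun y => u y * gaugePhase θ y)
        =ᶠ[𝓝 z] fun y => covDeriv e a u y * gaugePhase θ y := by
    filter_upwards [hu.eventually (by simp), hθ.eventually (by simp)] with y huy hθy
    exact covDeriv_mul_gaugePhase e (huy.differentiableAt two_ne_zero)
      (hθy.differentiableAt one_ne_zero)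
  rw [covDeriv_congr first_order, covDeriv_mul_gaugePhase e (differentiableAt_covDeriv e ha hu)
    (hθ.differentiableAt one_ne_zero)]

end CovariantDerivative

section SpatialOperators

variable {f h : ℝ × ℝ → ℝ} {X Y : ℝ × ℝ → ℝ × ℝ} {x : ℝ × ℝ}

theorem sgradPerp_const_smul (c : ℝ) (h : ℝ × ℝ → ℝ) (x : ℝ × ℝ) :
    sgradPerp (c • h) x = c • sgradPerp h x := by
  simp [sgradPerp, pd1, pd2, fderiv_const_smul_field]

theorem slap_const_smul (c : ℝ) (h : ℝ × ℝ → ℝ) (x : ℝ × ℝ) :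
    slap (c • h) x = c * slap h x := by
  have pd1_smul (g : ℝ × ℝ → ℝ) : pd1 (c • g) = c • pd1 g := by
    ext y; simp [pd1, fderiv_const_smul_field]
  have pd2_smul (g : ℝ × ℝ → ℝ) : pd2 (c • g) = c • pd2 g := by
    ext y; simp [pd2, fderiv_const_smul_field]
  simp [slap, pd1_smul, pd2_smul, mul_add]

theorem sgradPerp_congr (hfh : f =ᶠ[𝓝 x] h) : sgradPerp f x = sgradPerp h x := by
  simp only [sgradPerp, pd1, pd2, hfh.fderiv_eq]

theorem differentiableAt_sgrad (hf : ContDiffAt ℝ 2 f x) : DifferentiableAt ℝ (sgrad f) x :=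
  (differentiableAt_fderiv_apply hf _).prodMk (differentiableAt_fderiv_apply hf _)

theorem differentiableAt_sgradPerp (hh : ContDiffAt ℝ 2 h x) :
    DifferentiableAt ℝ (sgradPerp h) x :=
  (differentiableAt_fderiv_apply hh _).neg.prodMk (differentiableAt_fderiv_apply hh _)

theorem sdiv_sub (hX : DifferentiableAt ℝ X x) (hY : DifferentiableAt ℝ Y x) :
    sdiv (fun y => X y - Y y) x = sdiv X x - sdiv Y x := by
  simp only [sdiv, pd1, pd2, fderiv_fun_sub hX hY, sub_apply, Prod.fst_sub, Prod.snd_sub]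
  ring

theorem sdiv_sgrad (hf : ContDiffAt ℝ 2 f x) : sdiv (sgrad f) x = slap f x := by
  have hsgrad := ((differentiableAt_fderiv_apply hf (1, 0)).hasFDerivAt.prodMk
    (differentiableAt_fderiv_apply hf (0, 1)).hasFDerivAt).fderiv
  exact congrArg (fun L : ℝ × ℝ →L[ℝ] ℝ × ℝ => (L (1, 0)).1 + (L (0, 1)).2) hsgrad

theorem fderiv_sgradPerp_apply (hh : ContDiffAt ℝ 2 h x) (e : ℝ × ℝ) :
    fderiv ℝ (sgradPerp h) x e = (-fderiv ℝ (pd2 h) x e, fderiv ℝ (pd1 h) x e) :=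
  congrArg (· e) ((differentiableAt_fderiv_apply hh (0, 1)).hasFDerivAt.neg.prodMk
    (differentiableAt_fderiv_apply hh (1, 0)).hasFDerivAt).fderiv

theorem sdiv_sgradPerp (hh : ContDiffAt ℝ 2 h x) : sdiv (sgradPerp h) x = 0 := by
  rw [sdiv, pd1, pd2, fderiv_sgradPerp_apply hh, fderiv_sgradPerp_apply hh]
  exact neg_add_eq_zero.2 (fderiv_fderiv_apply_comm hh _ _)

theorem sdiv_sgrad_sub_sgradPerp (hf : ContDiffAt ℝ 2 f x) (hh : ContDiffAt ℝ 2 h x) :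
    sdiv (fun y => sgrad f y - sgradPerp h y) x = slap f x := by
  rw [sdiv_sub (differentiableAt_sgrad hf) (differentiableAt_sgradPerp hh), sdiv_sgrad hf,
    sdiv_sgradPerp hh, sub_zero]

theorem scurl_sgradPerp (hh : ContDiffAt ℝ 2 h x) : scurl (sgradPerp h) x = slap h x := by
  rw [scurl, pd1, pd2, fderiv_sgradPerp_apply hh, fderiv_sgradPerp_apply hh]
  exact sub_neg_eq_add _ _

end SpatialOperators

section SpaceTimeOperators

variable {A B ζ : (ℝ × ℝ) × ℝ → ℝ × ℝ} {X : ℝ × ℝ → ℝ × ℝ} {u v : (ℝ × ℝ) × ℝ → ℂ}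
  {Φ θ : (ℝ × ℝ) × ℝ → ℝ} {z : (ℝ × ℝ) × ℝ}

theorem tdt_comp_fst {E : Type*} [NormedAddCommGroup E] [NormedSpace ℝ E]
    (g : ℝ × ℝ → E) (z : (ℝ × ℝ) × ℝ) : tdt (fun y => g y.1) z = 0 := by
  rw [tdt, fderiv_comp_fst_apply]
  exact map_zero _

theorem tgrad_comp_fst (g : ℝ × ℝ → ℝ) (z : (ℝ × ℝ) × ℝ) :
    tgrad (fun y => g y.1) z = sgrad g z.1 := by
  simp only [tgrad, sgrad, sp1, sp2, pd1, pd2, fderiv_comp_fst_apply]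

theorem tdiv_comp_fst (X : ℝ × ℝ → ℝ × ℝ) (z : (ℝ × ℝ) × ℝ) :
    tdiv (fun y => X y.1) z = sdiv X z.1 := by
  simp only [tdiv, sdiv, sp1, sp2, pd1, pd2, fderiv_comp_fst_apply]

theorem tdt_sub_comp_fst (hA : DifferentiableAt ℝ A z) (hX : DifferentiableAt ℝ X z.1) :
    tdt (fun y => A y - X y.1) z = tdt A z := by
  have hsub := fderiv_fun_sub hA (differentiableAt_comp_fst_iff.2 hX)
  rw [tdt, hsub, sub_apply]
  exact sub_eq_self.2 (tdt_comp_fst X z)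

theorem tcurl_sub_comp_fst (hA : DifferentiableAt ℝ A z) (hX : DifferentiableAt ℝ X z.1) :
    tcurl (fun y => A y - X y.1) z = tcurl A z - scurl X z.1 := by
  simp only [tcurl, scurl, sp1, sp2, pd1, pd2, sub_apply, fderiv_comp_fst_apply,
    fderiv_fun_sub hA (differentiableAt_comp_fst_iff.2 hX), Prod.fst_sub, Prod.snd_sub]
  ring

theorem differentiableAt_tcurl (hA : ContDiffAt ℝ 2 A z) : DifferentiableAt ℝ (tcurl A) z :=
  (differentiableAt_fderiv_apply hA _).snd.sub (differentiableAt_fderiv_apply hA _).fst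

theorem tgradPerp_tcurl_sub_comp_fst (hA : ContDiffAt ℝ 2 A z)
    (hX : ∀ᶠ y in 𝓝 z.1, DifferentiableAt ℝ X y) (hcurl : DifferentiableAt ℝ (scurl X) z.1) :
    tgradPerp (tcurl fun y => A y - X y.1) z = tgradPerp (tcurl A) z - sgradPerp (scurl X) z.1 := by
  have tcurl_near : tcurl (fun y => A y - X y.1) =ᶠ[𝓝 z] fun y => tcurl A y - scurl X y.1 := by
    filter_upwards [hA.eventually (by simp), continuousAt_fst.eventually hX] with y hAy hXy
    exact tcurl_sub_comp_fst (hAy.differentiableAt two_ne_zero) hXy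
  have hsub := fderiv_fun_sub (differentiableAt_tcurl hA) (differentiableAt_comp_fst_iff.2 hcurl)
  ext <;> simp only [tgradPerp, sgradPerp, sp1, sp2, pd1, pd2, tcurl_near.fderiv_eq, hsub,
    sub_apply, fderiv_comp_fst_apply, Prod.fst_sub, Prod.snd_sub, neg_sub_neg, neg_sub]

theorem covt_eq_covDeriv (Φ : (ℝ × ℝ) × ℝ → ℝ) (u : (ℝ × ℝ) × ℝ → ℂ) :
    covt Φ u = covDeriv ((0, 0), 1) (fun y => -Φ y) u := by
  ext z
  simp [covt, covDeriv, tdt]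

theorem tcpd1_eq_covDeriv (A : (ℝ × ℝ) × ℝ → ℝ × ℝ) (u : (ℝ × ℝ) × ℝ → ℂ) :
    tcpd1 A u = covDeriv ((1, 0), 0) (fun y => (A y).1) u := rfl

theorem tcpd2_eq_covDeriv (A : (ℝ × ℝ) × ℝ → ℝ × ℝ) (u : (ℝ × ℝ) × ℝ → ℂ) :
    tcpd2 A u = covDeriv ((0, 1), 0) (fun y => (A y).2) u := rfl

theorem covt_mul_gaugePhase (hu : DifferentiableAt ℝ u z) (hθ : DifferentiableAt ℝ θ z) :
    covt (fun y => Φ y + tdt θ y) (fun y => u y * gaugePhase θ y) z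
      = covt Φ u z * gaugePhase θ z := by
  simp only [covt_eq_covDeriv, neg_add, ← sub_eq_add_neg]
  exact covDeriv_mul_gaugePhase _ hu hθ

theorem tcovGrad_mul_gaugePhase (hu : DifferentiableAt ℝ u z) (hθ : DifferentiableAt ℝ θ z) :
    tcovGrad (fun y => A y - tgrad θ y) (fun y => u y * gaugePhase θ y) z
      = gaugePhase θ z • tcovGrad A u z := by
  simp only [tcovGrad, tcpd1_eq_covDeriv, tcpd2_eq_covDeriv, Prod.fst_sub, Prod.snd_sub, tgrad,
    sp1, sp2, covDeriv_mul_gaugePhase _ hu hθ, Prod.smul_mk, smul_eq_mul, mul_comm]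

theorem tcovLap_mul_gaugePhase (hA : DifferentiableAt ℝ A z) (hu : ContDiffAt ℝ 2 u z)
    (hθ : ContDiffAt ℝ 1 θ z) :
    tcovLap (fun y => A y - tgrad θ y) (fun y => u y * gaugePhase θ y) z
      = tcovLap A u z * gaugePhase θ z := by
  simp only [tcovLap, tcpd1_eq_covDeriv, tcpd2_eq_covDeriv, Prod.fst_sub, Prod.snd_sub, tgrad,
    sp1, sp2, covDeriv_covDeriv_mul_gaugePhase _ hA.fst hu hθ,
    covDeriv_covDeriv_mul_gaugePhase _ hA.snd hu hθ, add_mul]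

theorem tcovGrad_sub_potential :
    tcovGrad (fun y => B y - ζ y) v z
      = tcovGrad B v z + (Complex.I * ((ζ z).1 : ℂ) * v z, Complex.I * ((ζ z).2 : ℂ) * v z) := by
  simp only [tcovGrad, tcpd1_eq_covDeriv, tcpd2_eq_covDeriv, Prod.fst_sub, Prod.snd_sub,
    covDeriv_sub_potential, Prod.mk_add_mk]

theorem tcovLap_sub_potential (hB : DifferentiableAt ℝ B z) (hζ : DifferentiableAt ℝ ζ z)
    (hv : ContDiffAt ℝ 2 v z) :
    tcovLap (fun y => B y - ζ y) v z
      = tcovLap B v z + 2 * Complex.I * cdotR (tcovGrad B v z) (ζ z)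
        + Complex.I * v z * (tdiv ζ z : ℂ) - v z * (rdot (ζ z) (ζ z) : ℂ) := by
  simp only [tcovLap, tcovGrad, tcpd1_eq_covDeriv, tcpd2_eq_covDeriv, Prod.fst_sub, Prod.snd_sub,
    covDeriv_covDeriv_sub_potential _ hB.fst hζ.fst hv,
    covDeriv_covDeriv_sub_potential _ hB.snd hζ.snd hv, fderiv.fst hζ, fderiv.snd hζ,
    ContinuousLinearMap.comp_apply, ContinuousLinearMap.coe_fst', ContinuousLinearMap.coe_snd',
    cdotR, rdot, tdiv, sp1, sp2, Complex.ofReal_add, Complex.ofReal_mul]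
  ring

end SpaceTimeOperators

section Current

variable {B ζ : (ℝ × ℝ) × ℝ → ℝ × ℝ} {v : (ℝ × ℝ) × ℝ → ℂ} {z : (ℝ × ℝ) × ℝ}

theorem rip_mul_mul_right (a b c : ℂ) : rip (a * c) (b * c) = Complex.normSq c * rip a b := by
  simp only [rip, Complex.mul_re, Complex.mul_im, Complex.normSq_apply]
  ring

theorem ripv_mul_smul (a c : ℂ) (Y : ℂ × ℂ) :
    ripv (a * c) (c • Y) = Complex.normSq c • ripv a Y := by
  simp only [ripv, Prod.smul_fst, Prod.smul_snd, smul_eq_mul, mul_comm c, rip_mul_mul_right,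
    Prod.smul_mk]

theorem ripv_tcovGrad_sub_potential :
    ripv (Complex.I * v z) (tcovGrad (fun y => B y - ζ y) v z)
      = ripv (Complex.I * v z) (tcovGrad B v z) + Complex.normSq (v z) • ζ z := by
  rw [tcovGrad_sub_potential]
  ext <;> simp [ripv, rip, Complex.normSq_apply] <;> ring

end Current

section ModifiedEquations

variable {f : ℝ × ℝ → ℝ} {X Z : ℝ × ℝ → ℝ × ℝ} {u v : (ℝ × ℝ) × ℝ → ℂ}
  {A B : (ℝ × ℝ) × ℝ → ℝ × ℝ} {Φ : (ℝ × ℝ) × ℝ → ℝ} {z : (ℝ × ℝ) × ℝ}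

theorem sub_forcing_eq_sub_tgrad (hZ : Z = fun x => sgrad f x - X x)
    (hB : B = fun y => A y - X y.1) :
    (fun y => B y - Z y.1) = fun y => A y - tgrad (fun w => f w.1) y := by
  funext y
  rw [hZ, hB, tgrad_comp_fst, sub_sub_sub_cancel_right]

theorem covt_eq_of_gauge_shift {c : ℂ} (hf : ContDiffAt ℝ 2 f z.1) (hX : DifferentiableAt ℝ X z.1)
    (hu : ContDiffAt ℝ 2 u z) (hA : DifferentiableAt ℝ A z)
    (hZ : Z = fun x => sgrad f x - X x) (hB : B = fun y => A y - X y.1)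
    (hv : v = fun y => u y * gaugePhase (fun w => f w.1) y)
    (heq : covt Φ u z = tcovLap A u z + c) :
    covt Φ v z
      = tcovLap B v z + c * gaugePhase (fun w => f w.1) z
        + 2 * Complex.I * cdotR (tcovGrad B v z) (Z z.1)
        + Complex.I * v z * (sdiv Z z.1 : ℂ) - v z * (rdot (Z z.1) (Z z.1) : ℂ) := by
  set θ : (ℝ × ℝ) × ℝ → ℝ := fun w => f w.1
  have hθ : ContDiffAt ℝ 2 θ z := hf.comp z contDiffAt_fst
  have hv₂ : ContDiffAt ℝ 2 v z := hv ▸ hu.mul (contDiffAt_gaugePhase hθ)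
  have hB₁ : DifferentiableAt ℝ B z := hB ▸ hA.sub (differentiableAt_comp_fst_iff.2 hX)
  have hZ₁ : DifferentiableAt ℝ (fun y : (ℝ × ℝ) × ℝ => Z y.1) z :=
    differentiableAt_comp_fst_iff.2 (hZ ▸ (differentiableAt_sgrad hf).sub hX)
  have hΦ : (fun y => Φ y + tdt θ y) = Φ := funext fun y => by rw [tdt_comp_fst f, add_zero]
  calc covt Φ v z
      = covt Φ u z * gaugePhase θ z := by
        rw [hv, ← covt_mul_gaugePhase (hu.differentiableAt two_ne_zero)
          (hθ.differentiableAt two_ne_zero), hΦ]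
    _ = tcovLap A u z * gaugePhase θ z + c * gaugePhase θ z := by rw [heq, add_mul]
    _ = tcovLap (fun y => B y - Z y.1) v z + c * gaugePhase θ z := by
        rw [← tcovLap_mul_gaugePhase hA hu (hθ.of_le one_le_two), ← hv,
          sub_forcing_eq_sub_tgrad hZ hB]
    _ = _ := by
        rw [tcovLap_sub_potential hB₁ hZ₁ hv₂, tdiv_comp_fst]
        ring

theorem ripv_tcovGrad_of_gauge_shift (hf : DifferentiableAt ℝ f z.1) (hu : DifferentiableAt ℝ u z)
    (hZ : Z = fun x => sgrad f x - X x) (hB : B = fun y => A y - X y.1)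
    (hv : v = fun y => u y * gaugePhase (fun w => f w.1) y) :
    ripv (Complex.I * u z) (tcovGrad A u z)
      = ripv (Complex.I * v z) (tcovGrad B v z) + Complex.normSq (v z) • Z z.1 := by
  rw [← ripv_tcovGrad_sub_potential (ζ := fun y => Z y.1), sub_forcing_eq_sub_tgrad hZ hB, hv,
    tcovGrad_mul_gaugePhase hu (differentiableAt_comp_fst_iff.2 hf), ← mul_assoc, ripv_mul_smul,
    normSq_gaugePhase, one_smul]

theorem tdt_add_eq_of_gauge_shift {E : ℝ × ℝ} (hf : DifferentiableAt ℝ f z.1)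
    (hX : ∀ᶠ y in 𝓝 z.1, DifferentiableAt ℝ X y) (hcurl : DifferentiableAt ℝ (scurl X) z.1)
    (hu : DifferentiableAt ℝ u z) (hA : ContDiffAt ℝ 2 A z)
    (hZ : Z = fun x => sgrad f x - X x) (hB : B = fun y => A y - X y.1)
    (hv : v = fun y => u y * gaugePhase (fun w => f w.1) y)
    (heq : tdt A z + E = tgradPerp (tcurl A) z + ripv (Complex.I * u z) (tcovGrad A u z)) :
    tdt B z + E
      = tgradPerp (tcurl B) z + sgradPerp (scurl X) z.1
        + ripv (Complex.I * v z) (tcovGrad B v z) + Complex.normSq (v z) • Z z.1 := by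
  have hdt : tdt B z = tdt A z :=
    hB ▸ tdt_sub_comp_fst (hA.differentiableAt two_ne_zero) hX.self_of_nhds
  rw [hdt, heq, ripv_tcovGrad_of_gauge_shift hf hu hZ hB hv, hB,
    tgradPerp_tcurl_sub_comp_fst hA hX hcurl]
  abel

end ModifiedEquations

/-- `N` is any gauge equivariant nonlinearity, such as `N u = (u / ε²) (1 - |u|²)`, and `E` takes
the place of `∇Φ`. -/
theorem modified_equations_general
    (Ω : Set (ℝ × ℝ)) (hΩ : IsOpen Ω) (h_ex : ℝ) (f h₀ : ℝ × ℝ → ℝ)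
    (hf : ContDiffOn ℝ 2 f Ω) (hh₀ : ContDiffOn ℝ 2 h₀ Ω)
    (hΔf : ∀ x ∈ Ω, slap f x = f x) (hΔh₀ : ∀ x ∈ Ω, slap h₀ x = h₀ x)
    (Z : ℝ × ℝ → ℝ × ℝ) (hZ : Z = fun x => sgrad f x - h_ex • sgradPerp h₀ x)
    (N : ℂ → ℂ) (hN : ∀ c e : ℂ, ‖e‖ = 1 → N (c * e) = N c * e)
    (u : (ℝ × ℝ) × ℝ → ℂ) (A : (ℝ × ℝ) × ℝ → ℝ × ℝ) (Φ : (ℝ × ℝ) × ℝ → ℝ)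
    (E : (ℝ × ℝ) × ℝ → ℝ × ℝ)
    (hu : ContDiffOn ℝ 2 u (Ω ×ˢ (Set.univ : Set ℝ)))
    (hA : ContDiffOn ℝ 2 A (Ω ×ˢ (Set.univ : Set ℝ)))
    (heq1 : ∀ x ∈ Ω, ∀ t : ℝ, covt Φ u (x, t) = tcovLap A u (x, t) + N (u (x, t)))
    (heq2 : ∀ x ∈ Ω, ∀ t : ℝ,
      tdt A (x, t) + E (x, t)
        = tgradPerp (tcurl A) (x, t) + ripv (Complex.I * u (x, t)) (tcovGrad A u (x, t)))
    (v : (ℝ × ℝ) × ℝ → ℂ) (B : (ℝ × ℝ) × ℝ → ℝ × ℝ)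
    (hv : v = fun z => u z * Complex.exp (-Complex.I * (f z.1 : ℂ)))
    (hB : B = fun z => A z - h_ex • sgradPerp h₀ z.1) :
    (∀ x ∈ Ω, ∀ t : ℝ,
      covt Φ v (x, t)
        = tcovLap B v (x, t) + N (v (x, t))
          + 2 * Complex.I * cdotR (tcovGrad B v (x, t)) (Z x)
          + Complex.I * v (x, t) * (f x : ℂ)
          - v (x, t) * ((rdot (Z x) (Z x) : ℝ) : ℂ))
    ∧ (∀ x ∈ Ω, ∀ t : ℝ,
      tdt B (x, t) + E (x, t)
        = tgradPerp (tcurl B) (x, t)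
          + ripv (Complex.I * v (x, t)) (tcovGrad B v (x, t))
          + (Complex.normSq (v (x, t))) • sgrad f x
          - ((Complex.normSq (v (x, t)) - 1) * h_ex) • sgradPerp h₀ x) := by
  simp only [← sgradPerp_const_smul] at hZ hB
  have hf₂ {x : ℝ × ℝ} (hx : x ∈ Ω) : ContDiffAt ℝ 2 f x := hf.contDiffAt (hΩ.mem_nhds hx)
  have hh₂ {x : ℝ × ℝ} (hx : x ∈ Ω) : ContDiffAt ℝ 2 (h_ex • h₀) x :=
    (hh₀.contDiffAt (hΩ.mem_nhds hx)).const_smul h_ex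
  have hU {x : ℝ × ℝ} (hx : x ∈ Ω) (t : ℝ) : Ω ×ˢ (Set.univ : Set ℝ) ∈ 𝓝 (x, t) :=
    prod_mem_nhds (hΩ.mem_nhds hx) univ_mem
  refine ⟨fun x hx t => ?_, fun x hx t => ?_⟩
  · have hdiv : sdiv Z x = f x := by rw [hZ, sdiv_sgrad_sub_sgradPerp (hf₂ hx) (hh₂ hx), hΔf x hx]
    have hNv : N (v (x, t)) = N (u (x, t)) * gaugePhase (fun w => f w.1) (x, t) := by
      rw [hv]
      exact hN _ _ (norm_gaugePhase (fun w : (ℝ × ℝ) × ℝ => f w.1) (x, t))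
    rw [hNv, ← hdiv]
    exact covt_eq_of_gauge_shift (hf₂ hx) (differentiableAt_sgradPerp (hh₂ hx))
      (hu.contDiffAt (hU hx t)) ((hA.contDiffAt (hU hx t)).differentiableAt two_ne_zero)
      hZ hB hv (heq1 x hx t)
  · have hcurl : scurl (sgradPerp (h_ex • h₀)) =ᶠ[𝓝 x] h_ex • h₀ := by
      filter_upwards [hΩ.mem_nhds hx] with y hy
      rw [scurl_sgradPerp (hh₂ hy), slap_const_smul, hΔh₀ y hy, Pi.smul_apply, smul_eq_mul]
    have heqB := tdt_add_eq_of_gauge_shift ((hf₂ hx).differentiableAt two_ne_zero)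
      (mem_of_superset (hΩ.mem_nhds hx) fun y hy => differentiableAt_sgradPerp (hh₂ hy))
      (((hh₂ hx).differentiableAt two_ne_zero).congr_of_eventuallyEq hcurl)
      ((hu.contDiffAt (hU hx t)).differentiableAt two_ne_zero) (hA.contDiffAt (hU hx t))
      hZ hB hv (heq2 x hx t)
    simp only [heqB, sgradPerp_congr hcurl, hZ, sgradPerp_const_smul]
    module

/-- if `(u,A,Φ)` solves TDGL, then `v = u e^{−if}` and
`B = A − h_ex ∇^⊥ h₀` solve the modified equations with forcing `Z = ∇f − h_ex ∇^⊥ h₀`. -/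
theorem modified_equations
    (Ω : Set (ℝ × ℝ)) (hΩ : IsOpen Ω) (ε : ℝ) (hε : 0 < ε) (h_ex : ℝ)
    (f h₀ : ℝ × ℝ → ℝ)
    (hf : ContDiffOn ℝ (⊤ : ℕ∞) f Ω) (hh₀ : ContDiffOn ℝ (⊤ : ℕ∞) h₀ Ω)
    (hΔf : ∀ x ∈ Ω, slap f x = f x) (hΔh₀ : ∀ x ∈ Ω, slap h₀ x = h₀ x)
    (Z : ℝ × ℝ → ℝ × ℝ) (hZ : Z = fun x => sgrad f x - h_ex • sgradPerp h₀ x)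
    (u : (ℝ × ℝ) × ℝ → ℂ) (A : (ℝ × ℝ) × ℝ → ℝ × ℝ) (Φ : (ℝ × ℝ) × ℝ → ℝ)
    (hu : ContDiffOn ℝ (⊤ : ℕ∞) u (Ω ×ˢ (Set.univ : Set ℝ)))
    (hA : ContDiffOn ℝ (⊤ : ℕ∞) A (Ω ×ˢ (Set.univ : Set ℝ)))
    (hΦ : ContDiffOn ℝ (⊤ : ℕ∞) Φ (Ω ×ˢ (Set.univ : Set ℝ)))
    (heq1 : ∀ x ∈ Ω, ∀ t : ℝ,
      covt Φ u (x, t)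
        = tcovLap A u (x, t)
          + u (x, t) / (ε ^ 2 : ℂ) * (1 - (Complex.normSq (u (x, t)) : ℂ)))
    (heq2 : ∀ x ∈ Ω, ∀ t : ℝ,
      tdt A (x, t) + tgrad Φ (x, t)
        = tgradPerp (tcurl A) (x, t)
          + ripv (Complex.I * u (x, t)) (tcovGrad A u (x, t)))
    (v : (ℝ × ℝ) × ℝ → ℂ) (B : (ℝ × ℝ) × ℝ → ℝ × ℝ)
    (hv : v = fun z => u z * Complex.exp (-Complex.I * (f z.1 : ℂ)))
    (hB : B = fun z => A z - h_ex • sgradPerp h₀ z.1) :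
    (∀ x ∈ Ω, ∀ t : ℝ,
      covt Φ v (x, t)
        = tcovLap B v (x, t)
          + v (x, t) / (ε ^ 2 : ℂ) * (1 - (Complex.normSq (v (x, t)) : ℂ))
          + 2 * Complex.I * cdotR (tcovGrad B v (x, t)) (Z x)
          + Complex.I * v (x, t) * (f x : ℂ)
          - v (x, t) * ((rdot (Z x) (Z x) : ℝ) : ℂ))
    ∧ (∀ x ∈ Ω, ∀ t : ℝ,
      tdt B (x, t) + tgrad Φ (x, t)
        = tgradPerp (tcurl B) (x, t)
          + ripv (Complex.I * v (x, t)) (tcovGrad B v (x, t))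
          + (Complex.normSq (v (x, t))) • sgrad f x
          - ((Complex.normSq (v (x, t)) - 1) * h_ex) • sgradPerp h₀ x) := by
  have h2 : (2 : WithTop ℕ∞) ≤ (⊤ : ℕ∞) := WithTop.coe_le_coe.2 (le_top : (2 : ℕ∞) ≤ ⊤)
  exact modified_equations_general Ω hΩ h_ex f h₀ (hf.of_le h2) (hh₀.of_le h2) hΔf hΔh₀ Z hZ
    (fun c => c / (ε ^ 2 : ℂ) * (1 - (Complex.normSq c : ℂ)))
    (fun c e he => by simp only [Complex.normSq_eq_norm_sq, norm_mul, he, mul_one]; ring)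
    u A Φ (tgrad Φ) (hu.of_le h2) (hA.of_le h2) heq1 heq2 v B hv hB

end
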